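/- (Eqs. (4.8a)–(4.8b): structure of the solution.) Under the stated hypotheses, there exist C^∞ functions h, k : ℝ⁴ → Λ such that pointwise on ℝ⁴: F + f = c̄·h and X − Y = c·c̄·k. In particular F = −f + O(χ̄²) and X = −χ²/(2f) + O(χ²χ̄²). -/

import Mathlib

open scoped BigOperators

/-- Partial derivative of a `Λ`-valued function on `ℝ⁴` in the `i`-th coordinate
direction. -/
noncomputable def pd {Λ : Type*} [NormedAddCommGroup Λ] [NormedSpace ℝ Λ]
    (i : Fin 4) (u : (Fin 4 → ℝ) → Λ) : (Fin 4 → ℝ) → Λ :=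
  fun x => fderiv ℝ u x (Pi.single i 1)

/-- The second-order kinetic operator
`A u = e⁻¹ ∂_μ (e g^{μν} ∂_ν u) + i t^μ ∂_μ u + (i/2) e⁻¹ ∂_μ (e t^μ) u + r u`
of eq. (4.2). The conjugate operator `Ā` is `Aop e g (-t) r`. -/
noncomputable def Aop {Λ : Type*} [NormedCommRing Λ] [NormedAlgebra ℂ Λ]
    (e : (Fin 4 → ℝ) → ℝ) (g : (Fin 4 → ℝ) → Fin 4 → Fin 4 → ℝ)
    (t : (Fin 4 → ℝ) → Fin 4 → ℝ) (r : (Fin 4 → ℝ) → ℝ)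
    (u : (Fin 4 → ℝ) → Λ) : (Fin 4 → ℝ) → Λ :=
  fun x =>
    (e x)⁻¹ • (∑ μ : Fin 4, pd μ (fun y => e y • ∑ ν : Fin 4, g y μ ν • pd ν u y) x)
      + Complex.I • (∑ μ : Fin 4, t x μ • pd μ u x)
      + ((2 : ℝ)⁻¹ * (e x)⁻¹ *
          ∑ μ : Fin 4, fderiv ℝ (fun y => e y * t y μ) x (Pi.single μ 1)) •
          (Complex.I • u x)
      + r x • u x

/-!
The equation of motion for `F + f` already carries the factor `X̄ = c̄ / (2F̄)`, so `F + f = c̄ h`.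
Feeding this into `X - Y = (c / 2) (F⁻¹ + f⁻¹) = (c / 2) F⁻¹ (F + f) f⁻¹` produces the factor
`c c̄`.

The analytic input is that `F⁻¹` is as smooth as `F`. The units of an incomplete algebra need not
form an open set, so inversion is differentiated within the set of units, where it is the
restriction of inversion in the completion; higher smoothness follows by induction from
`D(F⁻¹) = -F⁻¹ (DF) F⁻¹`.
-/

section RingInverse

open UniformSpace
open scoped Ring Topology

theorem map_ringInverse_of_isUnit {M N : Type*} [MonoidWithZero M] [MonoidWithZero N]
    {a : M} (f : M →* N) (ha : IsUnit a) : f a⁻¹ʳ = (f a)⁻¹ʳ := by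
  obtain ⟨u, rfl⟩ := ha
  rw [Ring.inverse_unit]
  exact (Ring.inverse_unit (Units.map f u)).symm

theorem coe_completion_ringInverse {R : Type*} [Ring R] [UniformSpace R] [IsTopologicalRing R]
    [IsUniformAddGroup R] {a : R} (ha : IsUnit a) :
    ((a⁻¹ʳ : R) : Completion R) = (a : Completion R)⁻¹ʳ :=
  map_ringInverse_of_isUnit (Completion.coeRingHom (α := R)).toMonoidHom ha

theorem continuousOn_ringInverse_setOf_isUnit {R : Type*} [NormedRing R] :
    ContinuousOn Ring.inverse {a : R | IsUnit a} := by
  intro a ha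
  have completion_continuousAt : ContinuousAt Ring.inverse (a : Completion R) :=
    NormedRing.inverse_continuousAt (ha.map (Completion.coeRingHom (α := R))).unit
  rw [(Completion.isUniformInducing_coe R).isInducing.continuousWithinAt_iff]
  exact (completion_continuousAt.comp
    (Completion.continuous_coe R).continuousAt).continuousWithinAt.congr
      (fun _ hb ↦ coe_completion_ringInverse hb) (coe_completion_ringInverse ha)

variable {𝕜 E R : Type*} [NontriviallyNormedField 𝕜] [NormedAddCommGroup E] [NormedSpace 𝕜 E]
  [NormedRing R] [NormedAlgebra 𝕜 R]

theorem hasFDerivWithinAt_ringInverse_setOf_isUnit {a : R} (ha : IsUnit a) :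
    HasFDerivWithinAt Ring.inverse (-ContinuousLinearMap.mulLeftRight 𝕜 R a⁻¹ʳ a⁻¹ʳ)
      {b | IsUnit b} a := by
  -- Mathlib provides this instance only for commutative `R`.
  let _ : NormedAlgebra 𝕜 (Completion R) := { norm_smul_le := norm_smul_le }
  let ι : R →L[𝕜] Completion R := Completion.toComplL
  have ι_isEmbedding : Topology.IsEmbedding ι := Completion.toComplₗᵢ.isometry.isEmbedding
  have completion_deriv : HasFDerivAt Ring.inverse
      (-ContinuousLinearMap.mulLeftRight 𝕜 (Completion R) (ι a)⁻¹ʳ (ι a)⁻¹ʳ) (ι a) := by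
    have ι_a_isUnit : IsUnit (ι a) := ha.map (Completion.coeRingHom (α := R))
    obtain ⟨u, hu⟩ := ι_a_isUnit
    rw [← hu, Ring.inverse_unit]
    exact hasFDerivAt_ringInverse u
  have ι_comp_deriv : ι ∘L (-ContinuousLinearMap.mulLeftRight 𝕜 R a⁻¹ʳ a⁻¹ʳ) =
      (-ContinuousLinearMap.mulLeftRight 𝕜 (Completion R) (ι a)⁻¹ʳ (ι a)⁻¹ʳ) ∘L ι := by
    ext v
    simp [ι, ← coe_completion_ringInverse ha, Completion.coe_mul]
  have chain_rule : HasFDerivWithinAt (fun b ↦ (ι b)⁻¹ʳ)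
      (ι ∘L (-ContinuousLinearMap.mulLeftRight 𝕜 R a⁻¹ʳ a⁻¹ʳ)) {b | IsUnit b} a := by
    rw [ι_comp_deriv]
    exact (completion_deriv.comp a ι.hasFDerivAt).hasFDerivWithinAt
  have ι_inverse : ι ∘ Ring.inverse =ᶠ[𝓝[{b | IsUnit b}] a] fun b ↦ (ι b)⁻¹ʳ := by
    filter_upwards [self_mem_nhdsWithin] with b hb using coe_completion_ringInverse hb
  refine .of_comp_of_isEmbedding (t := Set.univ) ?_ ι.hasFDerivWithinAt ι_isEmbedding chain_rule
    ι_inverse ha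
  rw [nhdsWithin_univ]
  exact continuousOn_ringInverse_setOf_isUnit a ha

theorem contDiff_ringInverse_comp {n : ℕ∞} {F : E → R} (hF : ContDiff 𝕜 n F)
    (hU : ∀ x, IsUnit (F x)) : ContDiff 𝕜 n fun x ↦ (F x)⁻¹ʳ := by
  rw [contDiff_iff_forall_nat_le]
  intro m hm
  replace hF : ContDiff 𝕜 m F := hF.of_le (mod_cast hm)
  clear hm
  induction m with
  | zero =>
    exact contDiff_zero.2 (continuousOn_ringInverse_setOf_isUnit.comp_continuous hF.continuous hU)
  | succ m ih =>
    push_cast at hF ⊢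
    have hasFDerivAt_inverse (x : E) : HasFDerivAt (fun y ↦ (F y)⁻¹ʳ)
        (-ContinuousLinearMap.mulLeftRight 𝕜 R (F x)⁻¹ʳ (F x)⁻¹ʳ ∘L fderiv 𝕜 F x) x :=
      (hasFDerivWithinAt_ringInverse_setOf_isUnit (hU x)).comp_hasFDerivAt x
        (hF.differentiable (by simp) x).hasFDerivAt (.of_forall hU)
    have contDiff_inverse : ContDiff 𝕜 m fun x ↦ (F x)⁻¹ʳ := ih (hF.of_le le_self_add)
    refine contDiff_succ_iff_hasFDerivAt.2 ⟨_, ?_, hasFDerivAt_inverse⟩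
    exact (((ContinuousLinearMap.mulLeftRight 𝕜 R).contDiff.comp contDiff_inverse).clm_apply
      contDiff_inverse).neg.clm_comp (hF.fderiv_right le_rfl)

end RingInverse

theorem contDiff_pd {Λ : Type*} [NormedAddCommGroup Λ] [NormedSpace ℝ Λ] {n : WithTop ℕ∞}
    {u : (Fin 4 → ℝ) → Λ} (hu : ContDiff ℝ (n + 1) u) (i : Fin 4) : ContDiff ℝ n (pd i u) :=
  (hu.fderiv_right le_rfl).clm_apply contDiff_const

theorem contDiff_Aop {Λ : Type*} [NormedCommRing Λ] [NormedAlgebra ℂ Λ] {n : WithTop ℕ∞}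
    {e : (Fin 4 → ℝ) → ℝ} {g : (Fin 4 → ℝ) → Fin 4 → Fin 4 → ℝ}
    {t : (Fin 4 → ℝ) → Fin 4 → ℝ} {r : (Fin 4 → ℝ) → ℝ} {u : (Fin 4 → ℝ) → Λ}
    (he : ContDiff ℝ (n + 1) e) (he0 : ∀ x, e x ≠ 0) (hg : ContDiff ℝ (n + 1) g)
    (ht : ContDiff ℝ (n + 1) t) (hr : ContDiff ℝ n r) (hu : ContDiff ℝ (n + 2) u) :
    ContDiff ℝ n (Aop e g t r u) := by
  have contDiff_e_inv : ContDiff ℝ n fun x ↦ (e x)⁻¹ := (he.of_le le_self_add).inv he0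
  have contDiff_du (ν : Fin 4) : ContDiff ℝ (n + 1) (pd ν u) :=
    contDiff_pd (by rwa [add_assoc, one_add_one_eq_two]) ν
  have contDiff_flux (μ : Fin 4) :
      ContDiff ℝ (n + 1) fun x ↦ e x • ∑ ν : Fin 4, g x μ ν • pd ν u x :=
    he.smul (.sum fun ν _ ↦ (contDiff_pi.1 (contDiff_pi.1 hg μ) ν).smul (contDiff_du ν))
  have contDiff_second_order : ContDiff ℝ n fun x ↦
      (e x)⁻¹ • ∑ μ : Fin 4, pd μ (fun y ↦ e y • ∑ ν : Fin 4, g y μ ν • pd ν u y) x :=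
    contDiff_e_inv.smul (.sum fun μ _ ↦ contDiff_pd (contDiff_flux μ) μ)
  have contDiff_transport : ContDiff ℝ n fun x ↦ Complex.I • ∑ μ : Fin 4, t x μ • pd μ u x :=
    .const_smul _ (.sum fun μ _ ↦
      ((contDiff_pi.1 ht μ).smul (contDiff_du μ)).of_le le_self_add)
  have contDiff_div_t : ContDiff ℝ n fun x ↦
      ∑ μ : Fin 4, fderiv ℝ (fun y ↦ e y * t y μ) x (Pi.single μ 1) :=
    .sum fun μ _ ↦ contDiff_pd (he.mul (contDiff_pi.1 ht μ)) μ
  have contDiff_u : ContDiff ℝ n u := hu.of_le le_self_add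
  exact ((contDiff_second_order.add contDiff_transport).add
    (((contDiff_const.mul contDiff_e_inv).mul contDiff_div_t).smul (contDiff_u.const_smul _))).add
    (hr.smul contDiff_u)

open scoped Ring in
theorem solution_structure_general
    {Λ : Type*} [NormedCommRing Λ] [NormedAlgebra ℂ Λ] {n : ℕ∞}
    (c cb B f F Fb : (Fin 4 → ℝ) → Λ)
    (t : (Fin 4 → ℝ) → Fin 4 → ℝ) (r : (Fin 4 → ℝ) → ℝ)
    (g : (Fin 4 → ℝ) → Fin 4 → Fin 4 → ℝ) (e : (Fin 4 → ℝ) → ℝ)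
    (hc : ContDiff ℝ (n + 2) c) (hB : ContDiff ℝ n B) (hf : ContDiff ℝ n f)
    (hF : ContDiff ℝ (n + 2) F) (hFb : ContDiff ℝ n Fb)
    (ht : ContDiff ℝ (n + 1) t) (hr : ContDiff ℝ n r) (hg : ContDiff ℝ (n + 1) g)
    (he : ContDiff ℝ (n + 1) e) (he0 : ∀ x, e x ≠ 0)
    (hfU : ∀ x, IsUnit (f x)) (hFU : ∀ x, IsUnit (F x)) (hFbU : ∀ x, IsUnit (Fb x))
    (X Xb Y : (Fin 4 → ℝ) → Λ)
    (hX : ∀ x, X x = (2 : ℝ)⁻¹ • (c x * (F x)⁻¹ʳ))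
    (hXb : ∀ x, Xb x = (2 : ℝ)⁻¹ • (cb x * (Fb x)⁻¹ʳ))
    (hY : ∀ x, Y x = -((2 : ℝ)⁻¹ • (c x * (f x)⁻¹ʳ)))
    (heom : ∀ x, F x + f x = Xb x * (Fb x)⁻¹ʳ * (Aop e g t r X x + B x)) :
    ∃ h k : (Fin 4 → ℝ) → Λ, ContDiff ℝ n h ∧ ContDiff ℝ n k ∧
      (∀ x, F x + f x = cb x * h x) ∧
      (∀ x, X x - Y x = c x * cb x * k x) := by
  have contDiff_F_inv : ContDiff ℝ (n + 2) fun x ↦ (F x)⁻¹ʳ :=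
    contDiff_ringInverse_comp (n := n + 2) hF hFU
  have contDiff_f_inv := contDiff_ringInverse_comp hf hfU
  have contDiff_Fb_inv := contDiff_ringInverse_comp hFb hFbU
  have contDiff_X : ContDiff ℝ (n + 2) X := by
    rw [funext hX]
    exact (hc.mul contDiff_F_inv).const_smul _
  obtain ⟨h, contDiff_h, F_add_f⟩ : ∃ h, ContDiff ℝ n h ∧ ∀ x, F x + f x = cb x * h x := by
    refine ⟨fun x ↦ (2 : ℝ)⁻¹ • ((Fb x)⁻¹ʳ * (Fb x)⁻¹ʳ * (Aop e g t r X x + B x)),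
      ((contDiff_Fb_inv.mul contDiff_Fb_inv).mul
        ((contDiff_Aop he he0 hg ht hr contDiff_X).add hB)).const_smul _, fun x ↦ ?_⟩
    rw [heom, hXb, smul_mul_assoc, smul_mul_assoc, mul_smul_comm]
    congr 1
    ring
  refine ⟨h, fun x ↦ (2 : ℝ)⁻¹ • ((F x)⁻¹ʳ * (f x)⁻¹ʳ * h x), contDiff_h,
    (((contDiff_F_inv.of_le le_self_add).mul contDiff_f_inv).mul contDiff_h).const_smul _,
    F_add_f, fun x ↦ ?_⟩
  calc X x - Y x = (2 : ℝ)⁻¹ • (c x * ((F x)⁻¹ʳ + (f x)⁻¹ʳ)) := by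
        rw [hX, hY, sub_neg_eq_add, ← smul_add, mul_add]
    _ = (2 : ℝ)⁻¹ • (c x * ((F x)⁻¹ʳ * (cb x * h x) * (f x)⁻¹ʳ)) := by
        rw [Ring.inverse_add_inverse (iff_of_true (hFU x) (hfU x)), F_add_f]
    _ = c x * cb x * ((2 : ℝ)⁻¹ • ((F x)⁻¹ʳ * (f x)⁻¹ʳ * h x)) := by
        rw [mul_smul_comm]
        congr 1
        ac_rfl

/-- **Eqs. (4.8a)–(4.8b).** Structure of the solution: there are smooth `h`, `k`
with `F + f = χ̄² h` and `X − Y = χ² χ̄² k`, i.e. `F = −f + O(χ̄²)` and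
`X = −χ²/(2f) + O(χ² χ̄²)`. -/
theorem solution_structure
    {Λ : Type*} [NormedCommRing Λ] [NormedAlgebra ℂ Λ]
    (c cb B Bb f fb F Fb : (Fin 4 → ℝ) → Λ)
    (t : (Fin 4 → ℝ) → Fin 4 → ℝ) (r : (Fin 4 → ℝ) → ℝ)
    (g : (Fin 4 → ℝ) → Fin 4 → Fin 4 → ℝ) (e : (Fin 4 → ℝ) → ℝ)
    -- smoothness of all data
    (hc : ContDiff ℝ (⊤ : ℕ∞) c) (hcb : ContDiff ℝ (⊤ : ℕ∞) cb)
    (hB : ContDiff ℝ (⊤ : ℕ∞) B) (hBb : ContDiff ℝ (⊤ : ℕ∞) Bb)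
    (hf : ContDiff ℝ (⊤ : ℕ∞) f) (hfb : ContDiff ℝ (⊤ : ℕ∞) fb)
    (hF : ContDiff ℝ (⊤ : ℕ∞) F) (hFb : ContDiff ℝ (⊤ : ℕ∞) Fb)
    (ht : ContDiff ℝ (⊤ : ℕ∞) t) (hr : ContDiff ℝ (⊤ : ℕ∞) r)
    (hg : ContDiff ℝ (⊤ : ℕ∞) g) (hgsym : ∀ x μ ν, g x μ ν = g x ν μ)
    (he : ContDiff ℝ (⊤ : ℕ∞) e) (he0 : ∀ x, e x ≠ 0)
    -- nilpotency of the fermion bilinears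
    (hc2 : ∀ x, c x * c x = 0) (hcb2 : ∀ x, cb x * cb x = 0)
    -- invertibility
    (hfU : ∀ x, IsUnit (f x)) (hfbU : ∀ x, IsUnit (fb x))
    (hFU : ∀ x, IsUnit (F x)) (hFbU : ∀ x, IsUnit (Fb x))
    -- the constrained scalars X = c/(2F), X̄ = c̄/(2F̄), Y = -c/(2f), Ȳ = -c̄/(2f̄)
    (X Xb Y Yb : (Fin 4 → ℝ) → Λ)
    (hX : ∀ x, X x = (2 : ℝ)⁻¹ • (c x * Ring.inverse (F x)))
    (hXb : ∀ x, Xb x = (2 : ℝ)⁻¹ • (cb x * Ring.inverse (Fb x)))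
    (hY : ∀ x, Y x = -((2 : ℝ)⁻¹ • (c x * Ring.inverse (f x))))
    (hYb : ∀ x, Yb x = -((2 : ℝ)⁻¹ • (cb x * Ring.inverse (fb x))))
    -- the auxiliary-field equations of motion (4.7):
    -- F + f = X̄ F̄⁻¹ (A X + B) and F̄ + f̄ = X F⁻¹ (Ā X̄ + B̄)
    (heom : ∀ x, F x + f x = Xb x * Ring.inverse (Fb x) * (Aop e g t r X x + B x))
    (heomb : ∀ x, Fb x + fb x =
      X x * Ring.inverse (F x) * (Aop e g (fun y μ => -(t y μ)) r Xb x + Bb x))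
    :
    ∃ h k : (Fin 4 → ℝ) → Λ, ContDiff ℝ (⊤ : ℕ∞) h ∧ ContDiff ℝ (⊤ : ℕ∞) k ∧
      (∀ x, F x + f x = cb x * h x) ∧
      (∀ x, X x - Y x = c x * cb x * k x) := by
  exact solution_structure_general (n := ⊤) c cb B f F Fb t r g e hc hB hf hF hFb ht hr hg he he0
    hfU hFU hFbU X Xb Y hX hXb hY heom
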